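/- Let X ↪ Y be two Banach spaces with continuous embedding, I a bounded open interval of ℝ, and (u_n)_{n∈ℕ} a bounded sequence in C(Ī, Y). Assume u_n(t) ∈ X for all (n,t) ∈ ℕ×I, that K := sup{‖u_n(t)‖_X : (n,t) ∈ ℕ×I} < ∞, and that the family (u_n) is uniformly equicontinuous as maps into Y. If X is reflexive, then there exist a function u ∈ C(Ī, Y) which is weakly continuous from Ī into X, and a subsequence (u_{n_k}) such that for every t ∈ Ī, u_{n_k}(t) ⇀ u(t) weakly in X as k → ∞. -/

import Mathlib

open Set Filter

/-!
Bounded sets in a reflexive space are relatively weakly compact, so along every ultrafilter a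
bounded family in `X` has a weak limit (`exists_weak_limit_ultrafilter`); a weak limit is then
obtained along a filter as soon as all these ultrafilter limits coincide. This replaces
the Eberlein–Šmulian theorem.

All values `u n t` lie in one separable closed subspace `S` of `Y`, whose points are separated by
countably many functionals `g i` of norm at most one (`exists_seq_dual_separating`). Compactness of a
countable product of intervals gives one subsequence along which `g i (u n (q j))` converges for all
`i` and all `q j` in a countable dense set of times; equicontinuity extends this to every time
`t`. Each ultrafilter limit `z` of `v (nk k) t` has `ι z ∈ S`, because closed convex sets are weakly
closed, and the values `g i (ι z)` are prescribed, so `z` is unique and the subsequence converges weakly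
at every `t`. Norm estimates pass to weak limits, which gives continuity of the limit into `Y` and
its boundedness in `X`. Weak continuity follows from the same uniqueness argument: ultrafilter
limits of `wX s` as `s → t` all have image `ι (wX t)` under the injective map `ι`.
-/

/-- Weak compactness of bounded sets in a reflexive space, in ultrafilter form. -/
theorem exists_weak_limit_ultrafilter {X α : Type} [NormedAddCommGroup X] [NormedSpace ℝ X]
    (hrefl : Function.Surjective (NormedSpace.inclusionInDoubleDual ℝ X))
    (U : Ultrafilter α) (x : α → X) (K : ℝ) (hx : ∀ᶠ i in (U : Filter α), ‖x i‖ ≤ K) :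
    ∃ z : X, ∀ f : X →L[ℝ] ℝ, Tendsto (fun i => f (x i)) U (nhds (f z)) := by
  let J : α → WeakDual ℝ (StrongDual ℝ X) := fun i =>
    StrongDual.toWeakDual (NormedSpace.inclusionInDoubleDual ℝ X (x i))
  have hc := WeakDual.isCompact_closedBall (𝕜 := ℝ) (E := StrongDual ℝ X) 0 K
  obtain ⟨ξ, -, hξ⟩ := hc.ultrafilter_le_nhds (U.map J) (by
    rw [le_principal_iff]
    change ∀ᶠ i in (U : Filter α), J i ∈ _
    filter_upwards [hx] with i hi
    have := (NormedSpace.double_dual_bound ℝ X (x i)).trans hi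
    simpa [J] using this)
  obtain ⟨z, hz⟩ := hrefl (WeakDual.toStrongDual ξ)
  refine ⟨z, fun f => ?_⟩
  have h1 : Tendsto J U (nhds ξ) := hξ
  have h2 := ((WeakDual.eval_continuous f).tendsto ξ).comp h1
  have h3 : f z = ξ f := by
    rw [← NormedSpace.dual_def ℝ X z f, hz]; rfl
  rw [h3]
  exact h2

/-- Norm bounds pass to weak limits. -/
theorem norm_le_of_weak_limit {X α : Type} [NormedAddCommGroup X] [NormedSpace ℝ X]
    {l : Filter α} [l.NeBot] {x : α → X} {z : X} {C : ℝ}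
    (h : ∀ f : X →L[ℝ] ℝ, Tendsto (fun i => f (x i)) l (nhds (f z)))
    (hC : ∀ᶠ i in l, ‖x i‖ ≤ C) : ‖z‖ ≤ C := by
  obtain ⟨f, hf1, hf2⟩ := exists_dual_vector'' ℝ z
  have hfz : f z = ‖z‖ := by simpa using hf2
  rw [← hfz]
  refine le_of_tendsto (h f) ?_
  filter_upwards [hC] with i hi
  exact (le_abs_self _).trans (((f.le_opNorm (x i)).trans
    (mul_le_of_le_one_left (norm_nonneg _) hf1)).trans hi)

/-- Closed convex sets contain their weak limits. -/
theorem mem_of_weak_limit {X α : Type} [NormedAddCommGroup X] [NormedSpace ℝ X]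
    {l : Filter α} [l.NeBot] {x : α → X} {z : X} {s : Set X} (hs : IsClosed s)
    (hconv : Convex ℝ s)
    (h : ∀ f : X →L[ℝ] ℝ, Tendsto (fun i => f (x i)) l (nhds (f z)))
    (hmem : ∀ i, x i ∈ s) : z ∈ s := by
  by_contra hz
  obtain ⟨f, c, h1, h2⟩ := geometric_hahn_banach_closed_point hconv hs hz
  exact absurd (le_of_tendsto (h f) (Eventually.of_forall fun i => (h1 _ (hmem i)).le))
    (not_le.2 h2)

/-- The points of a separable subspace are separated by countably many functionals: take norming
functionals of a dense sequence. -/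
theorem exists_seq_dual_separating {Y : Type} [NormedAddCommGroup Y] [NormedSpace ℝ Y]
    (S : Submodule ℝ Y) (hS : TopologicalSpace.IsSeparable (S : Set Y)) :
    ∃ g : ℕ → Y →L[ℝ] ℝ, (∀ i, ‖g i‖ ≤ 1) ∧
      ∀ y ∈ S, ∀ y' ∈ S, (∀ i, g i y = g i y') → y = y' := by
  have : TopologicalSpace.SeparableSpace S := hS.separableSpace
  let d : ℕ → S := TopologicalSpace.denseSeq S
  have hd : DenseRange d := TopologicalSpace.denseRange_denseSeq S
  choose g hg1 hg2 using fun i => exists_dual_vector'' ℝ (d i : Y)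
  refine ⟨g, hg1, fun y hy y' hy' h => ?_⟩
  by_contra hne
  have hpos : 0 < ‖y - y'‖ := norm_pos_iff.2 (sub_ne_zero.2 hne)
  obtain ⟨i, hi⟩ := hd.exists_dist_lt (⟨y - y', S.sub_mem hy hy'⟩ : S) (half_pos hpos)
  rw [Subtype.dist_eq, dist_eq_norm] at hi
  change ‖y - y' - (d i : Y)‖ < _ at hi
  have h0 : g i (y - y') = 0 := by rw [map_sub, h i, sub_self]
  have h1 : g i (d i : Y) = ‖(d i : Y)‖ := by simpa using hg2 i
  have h2 : ‖(d i : Y)‖ ≤ ‖y - y' - (d i : Y)‖ := by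
    have h3 := (g i).le_opNorm (y - y' - (d i : Y))
    rw [map_sub, h0, h1, zero_sub, norm_neg, norm_norm] at h3
    exact h3.trans (mul_le_of_le_one_left (norm_nonneg _) (hg1 i))
  have h4 := norm_add_le (y - y' - (d i : Y)) (d i : Y)
  rw [sub_add_cancel] at h4
  linarith

/-- **Lemma 2.1 (Cazenave, Proposition 1.1.2/1.3.14).** Let `X ↪ Y` be two Banach
spaces with a continuous (injective) embedding `ι`, let `I = (a,b)` be a bounded open
interval, and let `(u_n)` be a bounded sequence in `C(Ī, Y)`. Assume `u_n(t) ∈ X`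
(witnessed by `v n t` with `ι (v n t) = u n t`) with
`sup{‖u_n(t)‖_X : n, t} = K < ∞`, and that `(u_n)` is uniformly equicontinuous in `Y`.
If `X` is reflexive, then there are `u ∈ C(Ī, Y)`, weakly continuous `Ī → X`, and a
subsequence `(u_{n_k})` such that `u_{n_k}(t) ⇀ u(t)` in `X` for every `t ∈ Ī`. -/
theorem weak_compactness_equicontinuous
    {X Y : Type} [NormedAddCommGroup X] [NormedSpace ℝ X] [CompleteSpace X]
    [NormedAddCommGroup Y] [NormedSpace ℝ Y] [CompleteSpace Y]
    -- `X` is reflexive: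
    (hrefl : Function.Surjective (NormedSpace.inclusionInDoubleDual ℝ X))
    -- continuous embedding `X ↪ Y`:
    (ι : X →L[ℝ] Y) (hι : Function.Injective ι)
    (a b : ℝ) (hab : a < b)
    (u : ℕ → ℝ → Y) (hcont : ∀ n, ContinuousOn (u n) (Icc a b))
    (CY : ℝ) (hbY : ∀ n, ∀ t ∈ Icc a b, ‖u n t‖ ≤ CY)
    (v : ℕ → ℝ → X) (hvι : ∀ n, ∀ t ∈ Icc a b, ι (v n t) = u n t)
    (K : ℝ) (hK : ∀ n, ∀ t ∈ Icc a b, ‖v n t‖ ≤ K)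
    (hequi : ∀ ε > 0, ∃ δ > 0, ∀ n, ∀ t ∈ Icc a b, ∀ s ∈ Icc a b,
      |t - s| < δ → ‖u n t - u n s‖ < ε) :
    ∃ (w : ℝ → Y) (wX : ℝ → X) (nk : ℕ → ℕ), StrictMono nk ∧
      ContinuousOn w (Icc a b) ∧
      (∀ t ∈ Icc a b, ι (wX t) = w t) ∧
      -- weak continuity of `w` as a map into `X`:
      (∀ f : X →L[ℝ] ℝ, ContinuousOn (fun t => f (wX t)) (Icc a b)) ∧
      -- weak convergence `u_{n_k}(t) ⇀ u(t)` in `X` for every `t ∈ Ī`: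
      (∀ t ∈ Icc a b, ∀ f : X →L[ℝ] ℝ,
        Tendsto (fun k => f (v (nk k) t)) atTop (nhds (f (wX t)))) := by
  -- One separable closed subspace containing all the values, hence a countable separating family.
  have hsep : TopologicalSpace.IsSeparable (⋃ n, u n '' Icc a b) :=
    TopologicalSpace.IsSeparable.iUnion fun n =>
      (isCompact_Icc.image_of_continuousOn (hcont n)).isSeparable
  let S : Submodule ℝ Y := (Submodule.span ℝ (⋃ n, u n '' Icc a b)).topologicalClosure
  have hSsep : TopologicalSpace.IsSeparable (S : Set Y) := hsep.span.closure
  have hSclosed : IsClosed (S : Set Y) := Submodule.isClosed_topologicalClosure _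
  have huS : ∀ n, ∀ t ∈ Icc a b, u n t ∈ S := fun n t ht =>
    Submodule.le_topologicalClosure _
      (Submodule.subset_span (mem_iUnion.2 ⟨n, mem_image_of_mem _ ht⟩))
  obtain ⟨g, hg1, hgsep⟩ := exists_seq_dual_separating S hSsep
  have hgle : ∀ i y, |g i y| ≤ ‖y‖ := fun i y =>
    ((g i).le_opNorm y).trans (mul_le_of_le_one_left (norm_nonneg _) (hg1 i))
  have : Nonempty (Icc a b) := ⟨⟨a, left_mem_Icc.2 hab.le⟩⟩
  let q : ℕ → Icc a b := TopologicalSpace.denseSeq (Icc a b)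
  have hq : DenseRange q := TopologicalSpace.denseRange_denseSeq _
  -- Sequential compactness of a countable product of intervals replaces a diagonal extraction.
  obtain ⟨c, -, nk, hnk, hlim⟩ :=
    (isCompact_univ_pi (fun _ : ℕ × ℕ => isCompact_Icc (a := -CY) (b := CY))).isSeqCompact
      (x := fun n p => g p.1 (u n (q p.2)))
      (fun n p _ => abs_le.1 ((hgle _ _).trans (hbY n _ (q p.2).2)))
  have hlim' : ∀ i j, Tendsto (fun k => g i (u (nk k) (q j))) atTop (nhds (c (i, j))) :=
    fun i j => (tendsto_pi_nhds.1 hlim) (i, j)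
  have hcauchy : ∀ t ∈ Icc a b, ∀ i, CauchySeq fun k => g i (u (nk k) t) := by
    intro t ht i
    refine Metric.cauchySeq_iff.2 fun ε hε => ?_
    obtain ⟨δ, hδ, hequi'⟩ := hequi (ε / 3) (by positivity)
    obtain ⟨j, hj⟩ := hq.exists_dist_lt (⟨t, ht⟩ : Icc a b) hδ
    obtain ⟨N, hN⟩ := Metric.cauchySeq_iff.1 (hlim' i j).cauchySeq (ε / 3) (by positivity)
    refine ⟨N, fun m hm n hn => ?_⟩
    have key : ∀ k, |g i (u (nk k) t) - g i (u (nk k) (q j))| < ε / 3 := fun k => by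
      rw [← map_sub]
      exact (hgle _ _).trans_lt (hequi' _ t ht _ (q j).2 hj)
    have h1 := abs_lt.1 (key m)
    have h2 := abs_lt.1 (key n)
    have h3 := hN m hm n hn
    rw [Real.dist_eq, abs_lt] at h3 ⊢
    constructor <;> linarith [h1.1, h1.2, h2.1, h2.2, h3.1, h3.2]
  have hexists : ∀ t ∈ Icc a b, ∃ z : X, ∀ f : X →L[ℝ] ℝ,
      Tendsto (fun k => f (v (nk k) t)) atTop (nhds (f z)) := by
    intro t ht
    choose r hr using fun i => cauchySeq_tendsto_of_complete (hcauchy t ht i)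
    have hU : ∀ U : Ultrafilter ℕ, (U : Filter ℕ) ≤ atTop → ∃ z : X, ι z ∈ S ∧
        (∀ i, g i (ι z) = r i) ∧
        ∀ f : X →L[ℝ] ℝ, Tendsto (fun k => f (v (nk k) t)) U (nhds (f z)) := by
      intro U hUle
      obtain ⟨z, hz⟩ := exists_weak_limit_ultrafilter hrefl U (fun k => v (nk k) t) K
        (Eventually.of_forall fun k => hK _ t ht)
      refine ⟨z, ?_, fun i => ?_, hz⟩
      · exact mem_of_weak_limit (s := ((S.comap ι.toLinearMap : Submodule ℝ X) : Set X))
          (hSclosed.preimage ι.continuous) (Submodule.convex _) hz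
          fun k => by
            change ι (v (nk k) t) ∈ S
            rw [hvι _ t ht]
            exact huS _ t ht
      · have h1 := hz ((g i).comp ι)
        simp only [ContinuousLinearMap.comp_apply, hvι _ t ht] at h1
        exact tendsto_nhds_unique h1 ((hr i).mono_left hUle)
    obtain ⟨z, hzS, hzr, -⟩ := hU (Ultrafilter.of atTop) (Ultrafilter.of_le _)
    refine ⟨z, fun f => (tendsto_iff_ultrafilter _ _ _).2 fun U hUle => ?_⟩
    obtain ⟨z', hzS', hzr', hz'⟩ := hU U hUle
    have : z' = z := hι (hgsep _ hzS' _ hzS fun i => (hzr' i).trans (hzr i).symm)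
    exact this ▸ hz' f
  choose! wX hwX using hexists
  have hwcont : ContinuousOn (fun t => ι (wX t)) (Icc a b) := by
    refine Metric.continuousOn_iff.2 fun t ht ε hε => ?_
    obtain ⟨δ, hδ, hequi'⟩ := hequi (ε / 2) (half_pos hε)
    refine ⟨δ, hδ, fun s hs hst => ?_⟩
    rw [dist_eq_norm]
    refine lt_of_le_of_lt ?_ (half_lt_self hε)
    refine norm_le_of_weak_limit (l := atTop) (x := fun k => u (nk k) s - u (nk k) t)
      (fun f => ?_) (Eventually.of_forall fun k => (hequi' _ s hs t ht hst).le)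
    have h := (hwX s hs (f.comp ι)).sub (hwX t ht (f.comp ι))
    simpa only [ContinuousLinearMap.comp_apply, hvι _ s hs, hvι _ t ht, ← map_sub] using h
  refine ⟨fun t => ι (wX t), wX, nk, hnk, hwcont, fun _ _ => rfl, fun f t ht => ?_, hwX⟩
  refine (tendsto_iff_ultrafilter _ _ _).2 fun U hUle => ?_
  have hbound : ∀ s ∈ Icc a b, ‖wX s‖ ≤ K := fun s hs =>
    norm_le_of_weak_limit (hwX s hs) (Eventually.of_forall fun k => hK _ s hs)
  obtain ⟨z, hz⟩ := exists_weak_limit_ultrafilter hrefl U wX K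
    (hUle (eventually_nhdsWithin_of_forall hbound))
  have hzt : z = wX t := by
    refine hι (SeparatingDual.eq_iff_forall_dual_eq (R := ℝ) |>.2 fun h => ?_)
    exact tendsto_nhds_unique (hz (h.comp ι))
      ((h.continuous.tendsto _).comp ((hwcont t ht).tendsto.mono_left hUle))
  rw [hzt] at hz
  exact hz f
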